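/- If A is a Dyment–Muchnik D-mass problem and B₀, B₁ are D-mass problems with B₀∧B₁ ≤_D A, then B₀ ≤_D A or B₁ ≤_D A. In particular, the ≡_D-degree of every Dyment–Muchnik D-mass problem is meet-irreducible in the Dyment lattice. -/

import Mathlib

/-!
Let `Φ` witness `B₀ ∧ B₁ ≤_D A` and pick `φ ∈ A`. Then `Φ(φ)(0) = i` for some `i ∈ {0, 1}`, and only
a finite part `σ` of the graph of `φ` is used to enumerate this value. For `ψ ∈ A` let `ψ'` be `σ`
followed by a copy of `ψ` shifted beyond the domain of `σ` (`graft`). Since `ψ ≤_e ψ'`, upward closure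
gives `ψ' ∈ A`; since `σ ⊆ ψ'`, the partial function `Φ(ψ')` has value `i` at `0`, so it lies in
`i⌢B_i`. Hence `ψ ↦ ψ' ↦ Φ(ψ') ↦ tail of Φ(ψ')` is a uniform reduction `B_i ≤_D A`
(`DRed_cons_of_mem`, `DRed_or_of_mpWedge`). The statement about degrees follows since
`B₀ ∧ B₁ ≤_D B_i` and `≤_D` is transitive.

The recursion-theoretic content is that enumeration operators compose (`enumOp_compAxioms`,
`ce_compAxioms`), proved by writing c.e. sets as unions of primitive recursive stages, so that only
bounded quantifiers remain at each stage.
-/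

def Dset (u : ℕ) : Set ℕ := {i | Nat.testBit u i}

def enumOp (W A : Set ℕ) : Set ℕ := {x | ∃ u, Nat.pair x u ∈ W ∧ Dset u ⊆ A}

def CE (W : Set ℕ) : Prop := ∃ f : ℕ →. ℕ, Partrec f ∧ W = f.Dom

def EnumRed (A B : Set ℕ) : Prop := ∃ W, CE W ∧ A = enumOp W B

def EnumEq (A B : Set ℕ) : Prop := EnumRed A B ∧ EnumRed B A

def WeStd (e : ℕ) : Set ℕ := {x | ((Denumerable.ofNat Nat.Partrec.Code e).eval x).Dom}

def PhiStd (e : ℕ) : Set ℕ → Set ℕ := enumOp (WeStd e)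

def pgraph (φ : ℕ →. ℕ) : Set ℕ := {n | n.unpair.2 ∈ φ n.unpair.1}

def peRed (φ ψ : ℕ →. ℕ) : Prop := EnumRed (pgraph φ) (pgraph ψ)

def pfAdd (φ ψ : ℕ →. ℕ) : ℕ →. ℕ := fun n => if n % 2 = 0 then φ (n / 2) else ψ (n / 2)

def pfCons (i : ℕ) (φ : ℕ →. ℕ) : ℕ →. ℕ := fun n => if n = 0 then Part.some i else φ (n - 1)

abbrev MassPb := Set (ℕ →. ℕ)

def mpPlus (A B : MassPb) : MassPb := {h | ∃ φ ∈ A, ∃ ψ ∈ B, h = pfAdd φ ψ}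

def mpCons (i : ℕ) (A : MassPb) : MassPb := pfCons i '' A

def mpWedge (A B : MassPb) : MassPb := mpCons 0 A ∪ mpCons 1 B

def mpArrow (A B : MassPb) : MassPb :=
  {h | ∃ e φ, h = pfCons e φ ∧ ∀ ψ ∈ A, ∃ χ ∈ B, pgraph χ = PhiStd e (pgraph (pfAdd φ ψ))}

def DRed (A B : MassPb) : Prop :=
  ∃ W, CE W ∧ ∀ ψ ∈ B, ∃ χ ∈ A, pgraph χ = enumOp W (pgraph ψ)

def DEq (A B : MassPb) : Prop := DRed A B ∧ DRed B A

def DwRed (A B : MassPb) : Prop := ∀ ψ ∈ B, ∃ φ ∈ A, peRed φ ψ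

def DwEq (A B : MassPb) : Prop := DwRed A B ∧ DwRed B A

def UpClosedE (A : MassPb) : Prop := ∀ φ ψ, φ ∈ A → peRed φ ψ → ψ ∈ A

def DMProblem (A : MassPb) : Prop := A.Nonempty ∧ UpClosedE A

def PartCompFn (φ : ℕ →. ℕ) : Prop := CE (pgraph φ)

def oplus (A B : Set ℕ) : Set ℕ := (fun x => 2*x) '' A ∪ (fun x => 2*x+1) '' B

theorem lt_of_mem_Dset {u i : ℕ} (h : i ∈ Dset u) : i < u :=
  lt_of_lt_of_le Nat.lt_two_pow_self (Nat.ge_two_pow_of_testBit h)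

/-! ### Stages of c.e. sets and canonical indices -/

/-- A c.e. set is the increasing union of uniformly primitive recursive stages, obtained by bounding
the running time of a code for its enumeration. -/
theorem CE.exists_stages {W : Set ℕ} (hW : CE W) :
    ∃ R : ℕ → ℕ → Prop, PrimrecRel R ∧ (∀ s t x, s ≤ t → R s x → R t x) ∧
      ∀ x, x ∈ W ↔ ∃ s, R s x := by
  obtain ⟨f, hf, rfl⟩ := hW
  obtain ⟨c, rfl⟩ := Nat.Partrec.Code.exists_code.1 (Partrec.nat_iff.1 hf)
  refine ⟨fun s x => (Nat.Partrec.Code.evaln s c x).isSome = true, ?_, ?_, ?_⟩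
  · refine Primrec.eq.comp (Primrec.option_isSome.comp ?_) (Primrec.const true)
    exact Nat.Partrec.Code.primrec_evaln.comp
      ((Primrec.fst.pair (Primrec.const c)).pair Primrec.snd)
  · intro s t x hst h
    obtain ⟨y, hy⟩ := Option.isSome_iff_exists.1 h
    exact Option.isSome_iff_exists.2 ⟨y, Nat.Partrec.Code.evaln_mono hst hy⟩
  · intro x
    simp only [PFun.mem_dom, Nat.Partrec.Code.evaln_complete, Option.isSome_iff_exists,
      Option.mem_def]
    exact exists_comm

/-- The projection of a primitive recursive relation is c.e., by unbounded search. -/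
theorem CE.of_stages {W : Set ℕ} {R : ℕ → ℕ → Prop} (hR : PrimrecRel R)
    (h : ∀ x, x ∈ W ↔ ∃ s, R s x) : CE W := by
  classical
  refine ⟨fun x => Nat.rfind fun s => Part.some (decide (R s x)), ?_, ?_⟩
  · refine Partrec.rfind (p := fun x s => Part.some (decide (R s x))) ?_
    have : Primrec fun p : ℕ × ℕ => decide (R p.2 p.1) :=
      (PrimrecRel.comp hR Primrec.snd Primrec.fst).decide
    exact this.to_comp
  · ext x
    rw [h]
    refine Iff.trans ?_ Nat.rfind_dom.symm
    simp

theorem primrecRel_testBit : PrimrecRel fun i u : ℕ => Nat.testBit u i = true := by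
  have hpow : Primrec fun i : ℕ => 2 ^ i := by
    have : Primrec fun i : ℕ => (Nat.rec 1 (fun _ y => 2 * y) i : ℕ) :=
      Primrec.nat_rec₁ 1 (Primrec.nat_mul.comp (Primrec.const 2) Primrec.snd)
    refine this.of_eq fun i => ?_
    induction i with
    | zero => rfl
    | succ n ih => simp only [ih]; ring
  have : PrimrecRel fun i u : ℕ => u / 2 ^ i % 2 = 1 :=
    Primrec.eq.comp (Primrec.nat_mod.comp
      (Primrec.nat_div.comp Primrec.snd (hpow.comp Primrec.fst)) (Primrec.const 2))
      (Primrec.const 1)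
  refine this.of_eq fun i u => ?_
  simp [Nat.testBit_eq_decide_div_mod_eq]

/-- Bounded quantification with parameters in an arbitrary `Primcodable` type. -/
theorem primrecRel_exists_lt {α : Type*} [Primcodable α] {R : ℕ → α → Prop}
    (hR : PrimrecRel R) : PrimrecRel fun n y => ∃ x < n, R x y :=
  (hR.exists_mem_list.comp (Primrec.list_range.comp Primrec.fst) Primrec.snd).of_eq (by simp)

theorem primrecRel_forall_lt {α : Type*} [Primcodable α] {R : ℕ → α → Prop}
    (hR : PrimrecRel R) : PrimrecRel fun n y => ∀ x < n, R x y :=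
  (hR.forall_mem_list.comp (Primrec.list_range.comp Primrec.fst) Primrec.snd).of_eq (by simp)

theorem primrecRel_Dset_subset : PrimrecRel fun v w : ℕ => Dset v ⊆ Dset w := by
  have h1 : PrimrecRel fun (i : ℕ) (p : ℕ × ℕ) =>
      ¬ Nat.testBit p.1 i = true ∨ Nat.testBit p.2 i = true :=
    ((primrecRel_testBit.comp Primrec.fst (Primrec.fst.comp Primrec.snd)).not).or
      (primrecRel_testBit.comp Primrec.fst (Primrec.snd.comp Primrec.snd))
  have h2 : PrimrecRel fun v w : ℕ => ∀ i < v,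
      ¬ Nat.testBit v i = true ∨ Nat.testBit w i = true :=
    (primrecRel_forall_lt h1).comp Primrec.fst Primrec.id
  refine h2.of_eq fun v w => ⟨fun h i hi => ?_, fun h i _ => ?_⟩
  · exact (h i (lt_of_mem_Dset hi)).resolve_left (fun hn => hn hi)
  · by_cases hi : Nat.testBit v i = true
    · exact Or.inr (h hi)
    · exact Or.inl hi

theorem exists_Dset_eq (F : Finset ℕ) : ∃ u, Dset u = (F : Set ℕ) := by
  refine ⟨Finset.equivBitIndices.symm F, ?_⟩
  ext i
  have : i ∈ Finset.equivBitIndices (Finset.equivBitIndices.symm F) ↔ i ∈ F := by simp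
  rw [Finset.mem_coe, ← this, Finset.equivBitIndices_apply, List.mem_toFinset,
    Nat.mem_bitIndices]
  rfl

theorem Dset_finite (u : ℕ) : (Dset u).Finite :=
  (Set.finite_Iio u).subset fun _ h => lt_of_mem_Dset h

/-! ### Composition of enumeration operators -/

/-- The set of axioms `⟨x, w⟩` for the composition of the operators given by `W` and `V`: some
axiom `⟨x, u⟩ ∈ W` has every element of `D_u` enumerated by `V` from `D_w`. -/
def compAxioms (W V : Set ℕ) : Set ℕ :=
  {n | ∃ u, Nat.pair n.unpair.1 u ∈ W ∧
    ∀ i ∈ Dset u, ∃ v, Nat.pair i v ∈ V ∧ Dset v ⊆ Dset n.unpair.2}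

theorem enumOp_compAxioms (W V A : Set ℕ) :
    enumOp (compAxioms W V) A = enumOp W (enumOp V A) := by
  ext x
  simp only [enumOp, compAxioms, Set.mem_ofPred_eq, Nat.unpair_pair]
  constructor
  · rintro ⟨w, ⟨u, hu, h⟩, hw⟩
    refine ⟨u, hu, fun i hi => ?_⟩
    obtain ⟨v, hv, hvw⟩ := h i hi
    exact ⟨v, hv, hvw.trans hw⟩
  · rintro ⟨u, hu, h⟩
    have hwit : ∀ i, ∃ v, i ∈ Dset u → Nat.pair i v ∈ V ∧ Dset v ⊆ A := by
      intro i
      by_cases hi : i ∈ Dset u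
      · obtain ⟨v, hv⟩ := h hi
        exact ⟨v, fun _ => hv⟩
      · exact ⟨0, fun h => absurd h hi⟩
    choose v hv using hwit
    have hfin : (⋃ i ∈ Dset u, Dset (v i)).Finite :=
      (Dset_finite u).biUnion fun i _ => Dset_finite (v i)
    obtain ⟨w, hw⟩ := exists_Dset_eq hfin.toFinset
    rw [hfin.coe_toFinset] at hw
    refine ⟨w, ⟨u, hu, fun i hi => ⟨v i, (hv i hi).1, ?_⟩⟩, ?_⟩
    · rw [hw]
      exact Set.subset_biUnion_of_mem (u := fun i => Dset (v i)) hi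
    · rw [hw]
      exact Set.iUnion₂_subset fun i hi => (hv i hi).2

theorem ce_compAxioms {W V : Set ℕ} (hW : CE W) (hV : CE V) : CE (compAxioms W V) := by
  obtain ⟨R, hR, Rmono, hRW⟩ := hW.exists_stages
  obtain ⟨S, hS, Smono, hSV⟩ := hV.exists_stages
  -- `⟨x, w⟩` is enumerated by stage `s` when all the witnesses `u`, `v` are below `s` and the axioms
  -- have entered `W` and `V` by stage `s`; this relation is built from the inside out. The tuples
  -- are `(i, s, w)` in `h1` and `(u, s, w)` in `h2`.
  have h1 : PrimrecRel fun (v : ℕ) (p : ℕ × ℕ × ℕ) =>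
      S p.2.1 (Nat.pair p.1 v) ∧ Dset v ⊆ Dset p.2.2 :=
    (hS.comp (Primrec.fst.comp (Primrec.snd.comp Primrec.snd))
      (Primrec₂.natPair.comp (Primrec.fst.comp Primrec.snd) Primrec.fst)).and
      (primrecRel_Dset_subset.comp Primrec.fst (Primrec.snd.comp (Primrec.snd.comp Primrec.snd)))
  have h2 : PrimrecRel fun (i : ℕ) (q : ℕ × ℕ × ℕ) => ¬ Nat.testBit q.1 i = true ∨
      ∃ v < q.2.1, S q.2.1 (Nat.pair i v) ∧ Dset v ⊆ Dset q.2.2 :=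
    (primrecRel_testBit.comp Primrec.fst (Primrec.fst.comp Primrec.snd)).not.or
      ((primrecRel_exists_lt h1).comp (Primrec.fst.comp (Primrec.snd.comp Primrec.snd))
        (Primrec.fst.pair (Primrec.snd.comp Primrec.snd)))
  have h3 : PrimrecRel fun (u : ℕ) (p : ℕ × ℕ) => R p.1 (Nat.pair p.2.unpair.1 u) ∧
      ∀ i < u, ¬ Nat.testBit u i = true ∨
        ∃ v < p.1, S p.1 (Nat.pair i v) ∧ Dset v ⊆ Dset p.2.unpair.2 :=
    (hR.comp (Primrec.fst.comp Primrec.snd) (Primrec₂.natPair.comp (Primrec.fst.comp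
      (Primrec.unpair.comp (Primrec.snd.comp Primrec.snd))) Primrec.fst)).and
      ((primrecRel_forall_lt h2).comp Primrec.fst (Primrec.fst.pair ((Primrec.fst.comp Primrec.snd).pair
        (Primrec.snd.comp (Primrec.unpair.comp (Primrec.snd.comp Primrec.snd))))))
  have h4 : PrimrecRel fun (s n : ℕ) => ∃ u < s, R s (Nat.pair n.unpair.1 u) ∧
      ∀ i < u, ¬ Nat.testBit u i = true ∨
        ∃ v < s, S s (Nat.pair i v) ∧ Dset v ⊆ Dset n.unpair.2 :=
    (primrecRel_exists_lt h3).comp Primrec.fst Primrec.id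
  refine CE.of_stages h4 fun n => ⟨?_, ?_⟩
  · rintro ⟨u, hu, h⟩
    obtain ⟨s₀, hs₀⟩ := (hRW _).1 hu
    have hwit : ∀ i, ∃ s, i ∈ Dset u →
        ∃ v < s, S s (Nat.pair i v) ∧ Dset v ⊆ Dset n.unpair.2 := by
      intro i
      by_cases hi : i ∈ Dset u
      · obtain ⟨v, hv, hvn⟩ := h i hi
        obtain ⟨s, hs⟩ := (hSV _).1 hv
        exact ⟨max s (v + 1), fun _ => ⟨v, by omega, Smono _ _ _ (le_max_left _ _) hs, hvn⟩⟩
      · exact ⟨0, fun h => absurd h hi⟩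
    choose t ht using hwit
    -- a stage late enough for `u`, for the `W`-axiom and for all the `V`-axioms
    set s := max (max s₀ (u + 1)) ((Finset.range u).sup t) with hs
    refine ⟨s, u, by omega, Rmono _ _ _ (by omega) hs₀, fun i hi => ?_⟩
    by_cases hiu : Nat.testBit u i = true
    · obtain ⟨v, hv, hvS, hvn⟩ := ht i hiu
      have hts : t i ≤ s := (Finset.le_sup (Finset.mem_range.2 hi)).trans (le_max_right _ _)
      exact Or.inr ⟨v, hv.trans_le hts, Smono _ _ _ hts hvS, hvn⟩
    · exact Or.inl hiu
  · rintro ⟨s, u, _, hu, h⟩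
    refine ⟨u, (hRW _).2 ⟨s, hu⟩, fun i hi => ?_⟩
    obtain ⟨v, _, hv, hvn⟩ := (h i (lt_of_mem_Dset hi)).resolve_left (fun hn => hn hi)
    exact ⟨v, (hSV _).2 ⟨s, hv⟩, hvn⟩

/-- Transitivity of `≤_D`: enumeration operators compose. -/
theorem DRed.trans {A B C : MassPb} (h₁ : DRed A B) (h₂ : DRed B C) : DRed A C := by
  obtain ⟨W, hW, hAB⟩ := h₁
  obtain ⟨V, hV, hBC⟩ := h₂
  refine ⟨compAxioms W V, ce_compAxioms hW hV, fun ψ hψ => ?_⟩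
  obtain ⟨χ, hχ, hχψ⟩ := hBC ψ hψ
  obtain ⟨θ, hθ, hθχ⟩ := hAB χ hχ
  exact ⟨θ, hθ, by rw [enumOp_compAxioms, ← hχψ, hθχ]⟩

/-! ### Elementary operators -/

/-- Operators that enumerate `x` either outright or after seeing the single element `f x`. All the
concrete operators of the argument (prepending a value, shifting, grafting) have this form. -/
theorem exists_ce_enumOp_eq {P Q : ℕ → Prop} {f : ℕ → ℕ} (hP : PrimrecPred P)
    (hQ : PrimrecPred Q) (hf : Primrec f) :
    ∃ W, CE W ∧ ∀ A, enumOp W A = {x | P x ∨ (Q x ∧ f x ∈ A)} := by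
  have h1 : PrimrecRel fun _ n : ℕ => P n.unpair.1 ∨
      (Q n.unpair.1 ∧ Nat.testBit n.unpair.2 (f n.unpair.1) = true) := by
    have hfst : Primrec fun p : ℕ × ℕ => p.2.unpair.1 :=
      Primrec.fst.comp (Primrec.unpair.comp Primrec.snd)
    exact (hP.comp hfst).or ((hQ.comp hfst).and (primrecRel_testBit.comp (hf.comp hfst)
      (Primrec.snd.comp (Primrec.unpair.comp Primrec.snd))))
  refine ⟨{n | P n.unpair.1 ∨ (Q n.unpair.1 ∧ Nat.testBit n.unpair.2 (f n.unpair.1) = true)},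
    CE.of_stages h1 fun x => by simp, fun A => ?_⟩
  ext x
  simp only [enumOp, Set.mem_ofPred_eq, Nat.unpair_pair]
  constructor
  · rintro ⟨u, h | ⟨h, hu⟩, hA⟩
    · exact Or.inl h
    · exact Or.inr ⟨h, hA hu⟩
  · rintro (h | ⟨h, hx⟩)
    · exact ⟨0, Or.inl h, fun i hi => by simp [Dset] at hi⟩
    · refine ⟨2 ^ f x, Or.inr ⟨h, Nat.testBit_two_pow_self⟩, fun i hi => ?_⟩
      have : i = f x := by simpa [Dset, Nat.testBit_two_pow, eq_comm] using hi
      exact this ▸ hx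

theorem DRed_cons (i : ℕ) (B : MassPb) : DRed (mpCons i B) B := by
  have hfst : Primrec fun x : ℕ => x.unpair.1 := Primrec.fst.comp Primrec.unpair
  obtain ⟨W, hW, h⟩ := exists_ce_enumOp_eq (P := fun x => x = Nat.pair 0 i)
    (Q := fun x => 1 ≤ x.unpair.1) (f := fun x => Nat.pair (x.unpair.1 - 1) x.unpair.2)
    (Primrec.eq.comp Primrec.id (Primrec.const _))
    (Primrec.nat_le.comp (Primrec.const 1) hfst)
    (Primrec₂.natPair.comp (Primrec.nat_sub.comp hfst (Primrec.const 1))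
      (Primrec.snd.comp Primrec.unpair))
  refine ⟨W, hW, fun ψ hψ => ⟨pfCons i ψ, ⟨ψ, hψ, rfl⟩, ?_⟩⟩
  rw [h]
  ext x
  obtain ⟨⟨a, b⟩, rfl⟩ := Nat.pairEquiv.surjective x
  by_cases ha : a = 0
  · simp [pgraph, pfCons, ha, Nat.pair_eq_pair]
  · simp [pgraph, pfCons, ha, Nat.pair_eq_pair, Nat.one_le_iff_ne_zero]

theorem mpWedge_DRed_left (B0 B1 : MassPb) : DRed (mpWedge B0 B1) B0 := by
  obtain ⟨W, hW, h⟩ := DRed_cons 0 B0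
  exact ⟨W, hW, fun ψ hψ => let ⟨χ, hχ, e⟩ := h ψ hψ; ⟨χ, Or.inl hχ, e⟩⟩

theorem mpWedge_DRed_right (B0 B1 : MassPb) : DRed (mpWedge B0 B1) B1 := by
  obtain ⟨W, hW, h⟩ := DRed_cons 1 B1
  exact ⟨W, hW, fun ψ hψ => let ⟨χ, hχ, e⟩ := h ψ hψ; ⟨χ, Or.inr hχ, e⟩⟩

/-- The operator deleting the first `n` values of a partial function. -/
theorem exists_ce_shift (n : ℕ) : ∃ W, CE W ∧
    ∀ A, enumOp W A = {x | Nat.pair (x.unpair.1 + n) x.unpair.2 ∈ A} := by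
  obtain ⟨W, hW, h⟩ := exists_ce_enumOp_eq (P := fun _ => False) (Q := fun _ => True)
    (f := fun x => Nat.pair (x.unpair.1 + n) x.unpair.2)
    ⟨inferInstance, Primrec.const _⟩ ⟨inferInstance, Primrec.const _⟩
    (Primrec₂.natPair.comp
      (Primrec.nat_add.comp (Primrec.fst.comp Primrec.unpair) (Primrec.const n))
      (Primrec.snd.comp Primrec.unpair))
  exact ⟨W, hW, fun A => by rw [h]; simp⟩

theorem DRed_of_cons (i : ℕ) (B : MassPb) : DRed B (mpCons i B) := by
  obtain ⟨W, hW, h⟩ := exists_ce_shift 1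
  refine ⟨W, hW, ?_⟩
  rintro _ ⟨χ, hχ, rfl⟩
  refine ⟨χ, hχ, ?_⟩
  rw [h]
  ext x
  simp [pgraph, pfCons]

/-! ### Grafting a finite part and meet-irreducibility -/

/-- The partial function whose graph below the argument `t` is the part of `D_t` lying in the graph
of `φ`, followed by a copy of `ψ` shifted by `t`. Every pair coded in `D_t` has first component
below `t`, so when `D_t ⊆ graph φ` the graph of `graft t φ ψ` contains all of `D_t`. -/
def graft (t : ℕ) (φ ψ : ℕ →. ℕ) : ℕ →. ℕ := fun z =>
  if z < t then (φ z).bind fun y => Part.assert (Nat.pair z y ∈ Dset t) fun _ => Part.some y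
  else ψ (z - t)

theorem pgraph_graft {t : ℕ} {φ : ℕ →. ℕ} (ht : Dset t ⊆ pgraph φ) (ψ : ℕ →. ℕ) :
    pgraph (graft t φ ψ) = {x | x ∈ Dset t ∨
      (t ≤ x.unpair.1 ∧ Nat.pair (x.unpair.1 - t) x.unpair.2 ∈ pgraph ψ)} := by
  ext x
  obtain ⟨⟨a, b⟩, rfl⟩ := Nat.pairEquiv.surjective x
  simp only [pgraph, graft, Nat.pairEquiv_apply, Function.uncurry_apply_pair, Set.mem_ofPred_eq,
    Nat.unpair_pair]
  by_cases ha : a < t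
  · simp only [ha, if_true, Part.mem_bind_iff, Part.mem_assert_iff, Part.mem_some_iff,
      not_le.2 ha, false_and, or_false]
    constructor
    · rintro ⟨y, _, h, rfl⟩
      simpa using h
    · intro h
      exact ⟨b, by simpa [pgraph] using ht h, by simpa using h, rfl⟩
  · have hn : Nat.pair a b ∉ Dset t := fun h =>
      ha ((Nat.left_le_pair a b).trans_lt (lt_of_mem_Dset h))
    simp [ha, hn, not_lt.1 ha]

theorem exists_ce_graft {t : ℕ} {φ : ℕ →. ℕ} (ht : Dset t ⊆ pgraph φ) :
    ∃ W, CE W ∧ ∀ ψ, pgraph (graft t φ ψ) = enumOp W (pgraph ψ) := by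
  have hfst : Primrec fun x : ℕ => x.unpair.1 := Primrec.fst.comp Primrec.unpair
  obtain ⟨W, hW, h⟩ := exists_ce_enumOp_eq (P := fun x => Nat.testBit t x = true)
    (Q := fun x => t ≤ x.unpair.1) (f := fun x => Nat.pair (x.unpair.1 - t) x.unpair.2)
    (primrecRel_testBit.comp Primrec.id (Primrec.const t))
    (Primrec.nat_le.comp (Primrec.const t) hfst)
    (Primrec₂.natPair.comp (Primrec.nat_sub.comp hfst (Primrec.const t))
      (Primrec.snd.comp Primrec.unpair))
  exact ⟨W, hW, fun ψ => by rw [h, pgraph_graft ht]; rfl⟩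

/-- Grafting loses no information, as `ψ` is recovered by shifting back. -/
theorem peRed_graft {t : ℕ} {φ : ℕ →. ℕ} (ht : Dset t ⊆ pgraph φ) (ψ : ℕ →. ℕ) :
    peRed ψ (graft t φ ψ) := by
  obtain ⟨W, hW, h⟩ := exists_ce_shift t
  refine ⟨W, hW, ?_⟩
  rw [h, pgraph_graft ht]
  ext x
  have hn : Nat.pair (x.unpair.1 + t) x.unpair.2 ∉ Dset t := fun hx => by
    have := lt_of_mem_Dset hx
    have := Nat.left_le_pair (x.unpair.1 + t) x.unpair.2
    omega
  simp [hn]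

/-- If the operator `W` maps `A` into `C` and produces the value `i` at `0` on some input `φ`, then
the problem of those members of `C` with value `i` at `0` is reducible to `A`: a finite part `D_t` of
`φ` already forces that value, and grafting `D_t` onto any `ψ ∈ A` yields a function that is again in
`A`, by upward closure. The input `φ` itself need not belong to `A`. -/
theorem DRed_cons_of_mem {A C : MassPb} (hA : UpClosedE A) {W : Set ℕ} (hW : CE W)
    (hWC : ∀ ψ ∈ A, ∃ χ ∈ C, pgraph χ = enumOp W (pgraph ψ)) {φ : ℕ →. ℕ} {i : ℕ}
    (hi : Nat.pair 0 i ∈ enumOp W (pgraph φ)) :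
    DRed {χ | χ ∈ C ∧ Nat.pair 0 i ∈ pgraph χ} A := by
  obtain ⟨t, htW, ht⟩ := hi
  obtain ⟨V, hV, hgraft⟩ := exists_ce_graft ht
  refine ⟨compAxioms W V, ce_compAxioms hW hV, fun ψ hψ => ?_⟩
  obtain ⟨χ, hχ, e⟩ := hWC _ (hA ψ _ hψ (peRed_graft ht ψ))
  refine ⟨χ, ⟨hχ, ?_⟩, by rw [enumOp_compAxioms, ← hgraft, e]⟩
  rw [e]
  exact ⟨t, htW, by rw [pgraph_graft ht]; exact fun x hx => Or.inl hx⟩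

theorem pair_zero_mem_pgraph_pfCons {i j : ℕ} {χ : ℕ →. ℕ} :
    Nat.pair 0 i ∈ pgraph (pfCons j χ) ↔ i = j := by
  simp [pgraph, pfCons]

theorem DRed.mono {A B C : MassPb} (h : A ⊆ B) : DRed A C → DRed B C := fun ⟨W, hW, hA⟩ =>
  ⟨W, hW, fun ψ hψ => let ⟨χ, hχ, e⟩ := hA ψ hψ; ⟨χ, h hχ, e⟩⟩

theorem DRed_or_of_mpWedge {A : MassPb} (hA : DMProblem A) {B0 B1 : MassPb}
    (h : DRed (mpWedge B0 B1) A) : DRed B0 A ∨ DRed B1 A := by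
  obtain ⟨⟨φ, hφ⟩, hup⟩ := hA
  obtain ⟨W, hW, hWC⟩ := h
  obtain ⟨χ, hχ | hχ, e⟩ := hWC φ hφ
  · obtain ⟨β, _, rfl⟩ := hχ
    have key := DRed_cons_of_mem hup hW hWC (e ▸ pair_zero_mem_pgraph_pfCons.2 rfl)
    refine Or.inl ((DRed_of_cons 0 B0).trans (key.mono ?_))
    rintro _ ⟨hχ | ⟨γ, _, rfl⟩, h0⟩
    · exact hχ
    · exact absurd (pair_zero_mem_pgraph_pfCons.1 h0) (by decide)
  · obtain ⟨β, _, rfl⟩ := hχ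
    have key := DRed_cons_of_mem hup hW hWC (e ▸ pair_zero_mem_pgraph_pfCons.2 rfl)
    refine Or.inr ((DRed_of_cons 1 B1).trans (key.mono ?_))
    rintro _ ⟨⟨γ, _, rfl⟩ | hχ, h0⟩
    · exact absurd (pair_zero_mem_pgraph_pfCons.1 h0) (by decide)
    · exact hχ

/-- If `A` is Dyment–Muchnik and `B₀ ∧ B₁ ≤_D A` then `B₀ ≤_D A` or `B₁ ≤_D A`;
in particular the `≡_D`-degree of `A` is meet-irreducible in the Dyment lattice. -/
theorem dm_meet_irreducible (A : MassPb) (hA : DMProblem A) :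
    (∀ B0 B1 : MassPb, DRed (mpWedge B0 B1) A → DRed B0 A ∨ DRed B1 A) ∧
    (∀ B0 B1 : MassPb, DEq A (mpWedge B0 B1) → DEq A B0 ∨ DEq A B1) := by
  refine ⟨fun _ _ h => DRed_or_of_mpWedge hA h, fun B0 B1 h => ?_⟩
  rcases DRed_or_of_mpWedge hA h.2 with h0 | h1
  · exact Or.inl ⟨h.1.trans (mpWedge_DRed_left B0 B1), h0⟩
  · exact Or.inr ⟨h.1.trans (mpWedge_DRed_right B0 B1), h1⟩
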